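/- Let X, Y, Z be smooth projective varieties of dimension n over a field k, and let φ': X ⇢ Y and φ'': Y ⇢ Z be convenient birational isomorphisms. Then the composite birational isomorphism φ'' ∘ φ' : X ⇢ Z is convenient. -/

import Mathlib

open AlgebraicGeometry CategoryTheory CategoryTheory.Limits

noncomputable section

universe u

/-- A variety over a field `k`: a reduced separated scheme of finite type over `Spec k`. -/
structure Variety (k : Type u) [Field k] : Type (u + 1) where
  /-- the underlying scheme -/
  toScheme : Scheme.{u}
  /-- the structure morphism to `Spec k` -/
  str : toScheme ⟶ Spec (CommRingCat.of k)
  reduced : IsReduced toScheme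
  separated : IsSeparated str
  locallyOfFiniteType : LocallyOfFiniteType str
  quasiCompact : QuasiCompact str

namespace Variety

variable {k : Type u} [Field k]

/-- The dimension of a variety, i.e. the Krull dimension of its underlying space. -/
def dim (V : Variety k) : WithBot ℕ∞ := topologicalKrullDim V.toScheme

/-- `W` together with (implicitly) its two projections is a product of `X` and `Y`
over `k`, i.e. `W ≅ X ×ₖ Y`. -/
def IsProductOf (W X Y : Variety k) : Prop :=
  ∃ e : W.toScheme ≅ Limits.pullback X.str Y.str,
    e.hom ≫ Limits.pullback.fst X.str Y.str ≫ X.str = W.str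

/-- `A` is the affine line `𝔸¹` over `k`. -/
def IsAffLine (A : Variety k) : Prop :=
  ∃ e : A.toScheme ≅ Spec (CommRingCat.of (Polynomial k)),
    e.hom ≫ Spec.map (CommRingCat.ofHom (algebraMap k (Polynomial k))) = A.str

/-- `A` is affine `r`-space `𝔸^r` over `k`. -/
def IsAffSpace (r : ℕ) (A : Variety k) : Prop :=
  ∃ e : A.toScheme ≅ Spec (CommRingCat.of (MvPolynomial (Fin r) k)),
    e.hom ≫ Spec.map (CommRingCat.ofHom (algebraMap k (MvPolynomial (Fin r) k))) = A.str

/-- A variety is smooth if its structure morphism is smooth. -/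
def IsSmoothVar (V : Variety k) : Prop := IsSmooth V.str

/-- Projective `N`-space over `k`, as the `Proj` of a polynomial ring. -/
def ProjSpace (k : Type u) [Field k] (N : ℕ) : Scheme.{u} :=
  letI := MvPolynomial.gradedAlgebra (σ := Fin (N + 1)) (R := k)
  Proj (MvPolynomial.homogeneousSubmodule (Fin (N + 1)) k)

/-- The structure morphism of projective `N`-space over `k`. -/
def ProjSpace.str (k : Type u) [Field k] (N : ℕ) :
    ProjSpace k N ⟶ Spec (CommRingCat.of k) :=
  letI := MvPolynomial.gradedAlgebra (σ := Fin (N + 1)) (R := k)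
  Proj.toSpecZero (MvPolynomial.homogeneousSubmodule (Fin (N + 1)) k) ≫
    Spec.map (CommRingCat.ofHom
      (algebraMap k (MvPolynomial.homogeneousSubmodule (Fin (N + 1)) k 0)))

/-- `P` is projective `N`-space over `k`, as a variety. -/
def IsProjSpaceVar (N : ℕ) (P : Variety k) : Prop :=
  ∃ e : P.toScheme ≅ ProjSpace k N, e.hom ≫ ProjSpace.str k N = P.str

/-- A variety is projective if it admits a closed immersion into some `ℙ^N` over `k`. -/
def IsProjectiveVar (V : Variety k) : Prop :=
  ∃ (N : ℕ) (i : V.toScheme ⟶ ProjSpace k N),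
    IsClosedImmersion i ∧ i ≫ ProjSpace.str k N = V.str

/-- `X` and `Y` are birationally isomorphic over `k`:
some dense open subvarieties are isomorphic over `k`. -/
def BirEquiv (X Y : Variety k) : Prop :=
  ∃ (U : X.toScheme.Opens) (V : Y.toScheme.Opens),
    Dense (U : Set X.toScheme) ∧ Dense (V : Set Y.toScheme) ∧
    ∃ e : U.toScheme ≅ V.toScheme, e.hom ≫ V.ι ≫ Y.str = U.ι ≫ X.str

/-- `X` and `Y` are stably birational: `X × 𝔸^r` and `Y × 𝔸^r` are birationally
isomorphic for some `r ≥ 0`. -/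
def StablyBirational (X Y : Variety k) : Prop :=
  ∃ (r : ℕ) (A XA YA : Variety k),
    IsAffSpace r A ∧ IsProductOf XA X A ∧ IsProductOf YA Y A ∧ BirEquiv XA YA

/-- `X` and `Y` are piecewise isomorphic: they admit finite partitions into locally
closed subvarieties which are isomorphic over `k` piece by piece. -/
def PiecewiseIso (X Y : Variety k) : Prop :=
  ∃ (m : ℕ) (P Q : Fin m → Variety k)
    (f : ∀ i, (P i).toScheme ⟶ X.toScheme) (g : ∀ i, (Q i).toScheme ⟶ Y.toScheme),
    (∀ i, IsImmersion (f i)) ∧ (∀ i, IsImmersion (g i)) ∧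
    (∀ i, f i ≫ X.str = (P i).str) ∧ (∀ i, g i ≫ Y.str = (Q i).str) ∧
    (∀ i j, i ≠ j → Disjoint (Set.range (f i).base) (Set.range (f j).base)) ∧
    (∀ i j, i ≠ j → Disjoint (Set.range (g i).base) (Set.range (g j).base)) ∧
    (⋃ i, Set.range (f i).base) = Set.univ ∧
    (⋃ i, Set.range (g i).base) = Set.univ ∧
    ∀ i, ∃ e : (P i).toScheme ≅ (Q i).toScheme, e.hom ≫ (Q i).str = (P i).str

/-- The set of generators of the scissor-type relations among varieties of the class `P`:
`[X] = [X']` for `X ≅ X'` over `k`, and `[X] = [Y] + [U]` whenever `Y` is a closed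
subvariety of `X` and `U` is its open complement. -/
def cutRel (P : Variety k → Prop) : Set (FreeAbelianGroup {V : Variety k // P V}) :=
  {a | (∃ X Y : {V : Variety k // P V},
          (∃ e : X.1.toScheme ≅ Y.1.toScheme, e.hom ≫ Y.1.str = X.1.str) ∧
          a = FreeAbelianGroup.of X - FreeAbelianGroup.of Y) ∨
       (∃ (X Y U : {V : Variety k // P V}) (i : Y.1.toScheme ⟶ X.1.toScheme)
          (j : U.1.toScheme ⟶ X.1.toScheme),
          IsClosedImmersion i ∧ IsOpenImmersion j ∧
          i ≫ X.1.str = Y.1.str ∧ j ≫ X.1.str = U.1.str ∧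
          Set.range j.base = (Set.range i.base)ᶜ ∧
          a = FreeAbelianGroup.of X - FreeAbelianGroup.of Y - FreeAbelianGroup.of U)}

/-- The Grothendieck group of the class of varieties satisfying `P`: the free abelian
group on (isomorphism classes of) varieties satisfying `P`, modulo the relations
`[X] = [Y] + [X ∖ Y]` for closed subvarieties `Y` of `X`. -/
def K0 (k : Type u) [Field k] (P : Variety k → Prop) : Type (u + 1) :=
  FreeAbelianGroup {V : Variety k // P V} ⧸ AddSubgroup.closure (cutRel P)

instance (P : Variety k → Prop) : AddCommGroup (K0 k P) :=
  QuotientAddGroup.Quotient.addCommGroup _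

/-- The class of a variety in the Grothendieck group. -/
def K0.cls {P : Variety k → Prop} (V : Variety k) (hV : P V) : K0 k P :=
  QuotientAddGroup.mk (FreeAbelianGroup.of ⟨V, hV⟩)

/-- `K_0(V_k^{(n)})`: the Grothendieck group of varieties of dimension at most `n`. -/
abbrev K0le (k : Type u) [Field k] (n : ℕ) : Type (u + 1) :=
  K0 k (fun V => V.dim ≤ (n : WithBot ℕ∞))

/-- `K_0[V_k]` (as an abelian group): the Grothendieck group of all varieties over `k`. -/
abbrev K0Var (k : Type u) [Field k] : Type (u + 1) := K0 k (fun _ => True)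

/-- The class of a variety in `K_0[V_k]`. -/
def K0Var.cls (V : Variety k) : K0Var k := K0.cls V trivial

/-- `K_0(V_k^{(n,n-1)})`: the Grothendieck group of varieties of dimension at most `n`,
where moreover the class of every variety of dimension `< n` is set to `0`. -/
def K0graded (k : Type u) [Field k] (n : ℕ) : Type (u + 1) :=
  FreeAbelianGroup {V : Variety k // V.dim ≤ (n : WithBot ℕ∞)} ⧸
    AddSubgroup.closure (cutRel (fun V => V.dim ≤ (n : WithBot ℕ∞)) ∪
      {a | ∃ X : {V : Variety k // V.dim ≤ (n : WithBot ℕ∞)},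
        X.1.dim < (n : WithBot ℕ∞) ∧ a = FreeAbelianGroup.of X})

instance (n : ℕ) : AddCommGroup (K0graded k n) :=
  QuotientAddGroup.Quotient.addCommGroup _

/-- The class of a variety in `K_0(V_k^{(n,n-1)})`. -/
def K0graded.cls (n : ℕ) (V : Variety k) (hV : V.dim ≤ (n : WithBot ℕ∞)) : K0graded k n :=
  QuotientAddGroup.mk (FreeAbelianGroup.of ⟨V, hV⟩)

/-- `x ∈ K_0(V_k^{(b)})` lies in the image of multiplication by `L = [𝔸¹]`, viewed as the
map `K_0(V_k^{(a)}) → K_0(V_k^{(b)})` sending `[Z]` to `[Z × 𝔸¹]`. -/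
def InMulLImage (a b : ℕ) (x : K0le k b) : Prop :=
  ∃ (m : ℕ) (c : Fin m → ℤ) (Z W : Fin m → Variety k)
    (_ : ∀ i, (Z i).dim ≤ (a : WithBot ℕ∞)) (hW : ∀ i, (W i).dim ≤ (b : WithBot ℕ∞)),
    (∀ i, ∃ A : Variety k, IsAffLine A ∧ IsProductOf (W i) (Z i) A) ∧
    x = ∑ i, c i • K0.cls (W i) (hW i)

/-- `L · χ = 0` in `K_0[V_k]`: there is a representation `χ = ∑ cᵢ [Zᵢ]` with
`∑ cᵢ [Zᵢ × 𝔸¹] = 0`. -/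
def MulLZero (χ : K0Var k) : Prop :=
  ∃ (m : ℕ) (c : Fin m → ℤ) (Z W : Fin m → Variety k),
    (∀ i, ∃ A : Variety k, IsAffLine A ∧ IsProductOf (W i) (Z i) A) ∧
    χ = ∑ i, c i • K0Var.cls (Z i) ∧
    (0 : K0Var k) = ∑ i, c i • K0Var.cls (W i)

/-- The subgroup of `K_0[V_k]` of multiples of `L`, i.e. the ideal generated by `L`
viewed as an additive subgroup. -/
def LMultiples (k : Type u) [Field k] : AddSubgroup (K0Var k) :=
  AddSubgroup.closure
    {y | ∃ (m : ℕ) (c : Fin m → ℤ) (Z W : Fin m → Variety k),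
      (∀ i, ∃ A : Variety k, IsAffLine A ∧ IsProductOf (W i) (Z i) A) ∧
      y = ∑ i, c i • K0Var.cls (W i)}

/-- `Z` realizes the closed complement `X ∖ U` of the open `U ⊆ X` as a variety. -/
def IsComplementOf (Z X : Variety k) (U : X.toScheme.Opens) : Prop :=
  ∃ i : Z.toScheme ⟶ X.toScheme, IsClosedImmersion i ∧ i ≫ X.str = Z.str ∧
    Set.range i.base = (U : Set X.toScheme)ᶜ

/-- The birational isomorphism between `n`-dimensional varieties `X ⇢ Y` represented by
an isomorphism `U → V` of open subvarieties is convenient: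
`[X ∖ U] - [Y ∖ V]` lies in the image of `·L : K_0(V_k^{(n-2)}) → K_0(V_k^{(n-1)})`. -/
def ConvenientRep (n : ℕ) (X Y : Variety k) (U : X.toScheme.Opens)
    (V : Y.toScheme.Opens) : Prop :=
  ∀ (ZX ZY : Variety k) (hZX : ZX.dim ≤ ((n - 1 : ℕ) : WithBot ℕ∞))
    (hZY : ZY.dim ≤ ((n - 1 : ℕ) : WithBot ℕ∞)),
    IsComplementOf ZX X U → IsComplementOf ZY Y V →
    InMulLImage (n - 2) (n - 1) (K0.cls ZX hZX - K0.cls ZY hZY)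

/-- A field `k` is convenient if every birational isomorphism between smooth projective
varieties over `k` is convenient. -/
def ConvenientField (k : Type u) [Field k] : Prop :=
  ∀ (n : ℕ) (X Y : Variety k), IsSmoothVar X → IsSmoothVar Y →
    IsProjectiveVar X → IsProjectiveVar Y →
    IrreducibleSpace X.toScheme → IrreducibleSpace Y.toScheme →
    X.dim = (n : WithBot ℕ∞) → Y.dim = (n : WithBot ℕ∞) →
    ∀ (U : X.toScheme.Opens) (V : Y.toScheme.Opens),
      Dense (U : Set X.toScheme) → Dense (V : Set Y.toScheme) →
      ∀ e : U.toScheme ≅ V.toScheme, e.hom ≫ V.ι ≫ Y.str = U.ι ≫ X.str →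
      ConvenientRep n X Y U V

end Variety
namespace Variety

variable {k : Type u} [Field k]

/-- The type of birational isomorphism classes of irreducible `n`-dimensional
varieties over `k` (the set `B_n`). -/
def BirClass (k : Type u) [Field k] (n : ℕ) : Type (u + 1) :=
  Quot (fun X Y : {V : Variety k // IrreducibleSpace V.toScheme ∧
    V.dim = (n : WithBot ℕ∞)} => BirEquiv X.1 Y.1)

/-- The type of stable birational isomorphism classes of irreducible varieties
over `k` (the set `SB`). -/
def StableBirClass (k : Type u) [Field k] : Type (u + 1) :=
  Quot (fun X Y : {V : Variety k // IrreducibleSpace V.toScheme} =>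
    StablyBirational X.1 Y.1)

/-- The family of varieties `C` together with the closed immersions `f i` realizes
exactly the `n`-dimensional irreducible components of `X`, each exactly once. -/
def RealizesComponents (n : ℕ) (X : Variety k) (m : ℕ)
    (C : Fin m → Variety k) (f : ∀ i, (C i).toScheme ⟶ X.toScheme) : Prop :=
  (∀ i, IsClosedImmersion (f i)) ∧ (∀ i, f i ≫ X.str = (C i).str) ∧
  Function.Injective (fun i => Set.range (f i).base) ∧
  (Set.range fun i => Set.range (f i).base) =
    {S | S ∈ irreducibleComponents X.toScheme ∧
      topologicalKrullDim S = (n : WithBot ℕ∞)}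

/-- `p : E ⟶ Z` is a Zariski-locally trivial `ℙ^ℓ`-bundle: every point of `Z` has an
open neighbourhood `W` such that `p⁻¹(W)` is isomorphic over `W` to `W × ℙ^ℓ`. -/
def IsProjBundle (ℓ : ℕ) {E Z : Variety k} (p : E.toScheme ⟶ Z.toScheme) : Prop :=
  ∀ z : Z.toScheme, ∃ W : Z.toScheme.Opens, z ∈ W ∧
    ∃ e : (p ⁻¹ᵁ W).toScheme ≅ Limits.pullback (W.ι ≫ Z.str) (ProjSpace.str k ℓ),
      e.hom ≫ Limits.pullback.fst (W.ι ≫ Z.str) (ProjSpace.str k ℓ) = p ∣_ W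

/-- `X` (of dimension `d`) has stable dimensional complexity `m`: `m` is the minimal
integer such that `X` is stably birational to `X' × 𝔸^(d-m)` for some variety `X'` of
dimension `m`. -/
def HasStableDimComplexity (X : Variety k) (d m : ℕ) : Prop :=
  (∃ X' A P : Variety k, X'.dim = (m : WithBot ℕ∞) ∧ IsAffSpace (d - m) A ∧
      IsProductOf P X' A ∧ StablyBirational X P) ∧
  ∀ j < m, ¬ ∃ X' A P : Variety k, X'.dim = (j : WithBot ℕ∞) ∧ IsAffSpace (d - j) A ∧
      IsProductOf P X' A ∧ StablyBirational X P

/-- Generators of the covering relations among smooth varieties: `[X] = ∑ᵢ [Xᵢ]`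
whenever `{Xᵢ → X}` is a finite family of locally closed embeddings of smooth
varieties with pairwise disjoint images whose union is all of `X`. -/
def smCutRel (k : Type u) [Field k] :
    Set (FreeAbelianGroup {V : Variety k // IsSmoothVar V}) :=
  {a | ∃ (X : {V : Variety k // IsSmoothVar V}) (m : ℕ)
        (P : Fin m → {V : Variety k // IsSmoothVar V})
        (f : ∀ i, (P i).1.toScheme ⟶ X.1.toScheme),
        (∀ i, IsImmersion (f i)) ∧ (∀ i, f i ≫ X.1.str = (P i).1.str) ∧
        (∀ i j, i ≠ j → Disjoint (Set.range (f i).base) (Set.range (f j).base)) ∧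
        (⋃ i, Set.range (f i).base) = Set.univ ∧
        a = FreeAbelianGroup.of X - ∑ i, FreeAbelianGroup.of (P i)}

/-- `K_0(V_k^{sm})`: the Grothendieck group of smooth varieties over `k`, with the
covering relations. -/
def K0sm (k : Type u) [Field k] : Type (u + 1) :=
  FreeAbelianGroup {V : Variety k // IsSmoothVar V} ⧸ AddSubgroup.closure (smCutRel k)

instance : AddCommGroup (K0sm k) := QuotientAddGroup.Quotient.addCommGroup _

/-- The class of a smooth variety in `K_0(V_k^{sm})`. -/
def K0sm.cls (V : Variety k) (hV : IsSmoothVar V) : K0sm k :=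
  QuotientAddGroup.mk (FreeAbelianGroup.of ⟨V, hV⟩)

end Variety
namespace Variety

variable {k : Type u} [Field k]

/-- The class of a variety in `K_0(V_k^{(n)})`. -/
def K0le.cls (n : ℕ) (V : Variety k) (hV : V.dim ≤ (n : WithBot ℕ∞)) : K0le k n :=
  K0.cls V hV

end Variety

open Variety

/-!
Let `V₀ ⊆ Y` be the image of `U₀`. Shrinking `U ≅ V` to `U₀ ≅ V₀` enlarges both complements by
isomorphic locally closed pieces, `U ∖ U₀ ≅ V ∖ V₀`, so the difference of their classes is
unchanged; likewise for `W ≅ T` and `V₀ ≅ T₀`. Hence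
`[X ∖ U₀] - [Z ∖ T₀] = ([X ∖ U₀] - [Y ∖ V₀]) + ([Y ∖ V₀] - [Z ∖ T₀])` is a sum of two elements
of the image of `L`. Density of `V₀` bounds the dimension of `Y ∖ V₀` by `n - 1`, so that its class
exists in `K_0(V_k^{(n-1)})`.
-/

lemma le_natCast_sub_one_of_add_one_le {d : WithBot ℕ∞} {n : ℕ} (h : d + 1 ≤ n) :
    d ≤ (n - 1 : ℕ) := by
  induction d with
  | bot => exact bot_le
  | coe d =>
    have hd : d + 1 ≤ n := by exact_mod_cast h
    have : d ≤ (n - 1 : ℕ) := by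
      rw [ENat.natCast_sub]
      exact ENat.le_sub_of_add_le_right ENat.one_ne_top hd
    exact WithBot.coe_le_coe.mpr this

lemma krullDim_add_one_le_of_strictMono {α β : Type*} [Preorder α] [Preorder β] (f : α → β)
    (hf : StrictMono f) (hlt : ∀ x, ∃ y, f x < y) :
    Order.krullDim α + 1 ≤ Order.krullDim β := by
  cases isEmpty_or_nonempty α
  · simp only [Order.krullDim_eq_bot, WithBot.bot_add, bot_le]
  have : Nonempty β := .map f inferInstance
  rw [Order.krullDim_eq_iSup_height_of_nonempty, Order.krullDim_eq_iSup_height_of_nonempty]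
  norm_cast
  rw [ENat.iSup_add]
  refine iSup_le fun x ↦ ?_
  obtain ⟨y, hy⟩ := hlt x
  calc Order.height x + 1 ≤ Order.height (f x) + 1 := by
        gcongr
        exact Order.height_le_height_apply_of_strictMono f hf x
    _ ≤ Order.height y := Order.height_add_one_le hy
    _ ≤ ⨆ y, Order.height y := le_iSup Order.height y

section Topology

open TopologicalSpace

lemma exists_lt_of_isNowhereDense {X : Type*} [TopologicalSpace X] [NoetherianSpace X]
    (s : IrreducibleCloseds X) (hs : IsNowhereDense (s : Set X)) : ∃ t, s < t := by
  obtain ⟨Z, hZ, hsZ⟩ := exists_mem_irreducibleComponents_subset_of_isIrreducible _ s.isIrreducible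
  refine ⟨⟨Z, hZ.1, isClosed_of_mem_irreducibleComponents Z hZ⟩, lt_of_le_of_ne hsZ ?_⟩
  rintro rfl
  obtain ⟨o, ho, hne, hoZ⟩ :=
    NoetherianSpace.exists_isOpen_nonempty_subset_irreducibleComponent Z hZ
  have ho_empty : o ⊆ ∅ := hs ▸ interior_maximal (hoZ.trans subset_closure) ho
  exact hne.ne_empty (Set.subset_empty_iff.mp ho_empty)

lemma topologicalKrullDim_add_one_le_of_isNowhereDense {X Y : Type*} [TopologicalSpace X]
    [TopologicalSpace Y] [NoetherianSpace Y] {f : X → Y} (hf : Topology.IsInducing f)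
    (hrange : IsNowhereDense (Set.range f)) :
    topologicalKrullDim X + 1 ≤ topologicalKrullDim Y :=
  krullDim_add_one_le_of_strictMono _ (IrreducibleCloseds.map_strictMono_of_isInducing hf)
    fun s ↦ exists_lt_of_isNowhereDense _
      (hrange.mono (Set.image_subset_range f s)).closure

end Topology

section Schemes

lemma opensRange_le_of_comp_eq {A B C : Scheme.{u}} {f : A ⟶ B} {g : B ⟶ C} {h : A ⟶ C}
    [IsOpenImmersion g] [IsOpenImmersion h] (w : f ≫ g = h) : h.opensRange ≤ g.opensRange := by
  subst w
  rintro _ ⟨x, rfl⟩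
  exact ⟨f x, rfl⟩

lemma preimage_opensRange_of_comp_eq {A B C : Scheme.{u}} {f : A ⟶ B} {g : B ⟶ C} {h : A ⟶ C}
    [IsOpenImmersion f] [IsOpenImmersion g] [IsOpenImmersion h] (w : f ≫ g = h) :
    g ⁻¹ᵁ h.opensRange = f.opensRange := by
  subst w
  rw [Scheme.Hom.opensRange_comp, Scheme.Hom.preimage_image_eq]

lemma denseRange_of_comp_eq {A B C : Scheme.{u}} {f : A ⟶ B} {g : B ⟶ C} {h : A ⟶ C}
    [IsOpenImmersion g] (w : f ≫ g = h) (hh : DenseRange h) : DenseRange f := by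
  have hdense : Dense (g ⁻¹' Set.range h) := hh.preimage g.isOpenEmbedding.isOpenMap
  rwa [← w, Scheme.Hom.comp_base, TopCat.coe_comp, Set.range_comp,
    Set.preimage_image_eq _ g.isOpenEmbedding.injective] at hdense

lemma range_morphismRestrict {X Y : Scheme.{u}} (f : X ⟶ Y) (U : Y.Opens) :
    Set.range (f ∣_ U) = U.ι ⁻¹' Set.range f := by
  simpa only [Set.preimage_univ, Set.image_univ] using
    Scheme.image_preimage_eq_of_isPullback (isPullback_morphismRestrict f U).flip Set.univ

lemma isReduced_subscheme_vanishingIdeal (X : Scheme.{u}) (S : TopologicalSpace.Closeds X) :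
    IsReduced (Scheme.IdealSheafData.vanishingIdeal S).subscheme := by
  set I := Scheme.IdealSheafData.vanishingIdeal S
  have (U : X.affineOpens) : _root_.IsReduced (Γ(X, U) ⧸ I.ideal U) :=
    (Ideal.isRadical_iff_quotient_reduced _).mp (PrimeSpectrum.isRadical_vanishingIdeal _)
  have (U : X.affineOpens) : IsReduced (Spec (CommRingCat.of (Γ(X, U) ⧸ I.ideal U))) :=
    inferInstance
  have : ∀ i, IsReduced (I.subschemeCover.openCover.X i) := this
  exact IsReduced.of_openCover (𝒰 := I.subschemeCover.openCover)

lemma exists_iso_of_range_eq {A B X : Scheme.{u}} (f : A ⟶ X) (g : B ⟶ X) [IsClosedImmersion f]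
    [IsClosedImmersion g] [IsReduced A] [IsReduced B] (h : Set.range f = Set.range g) :
    ∃ e : A ≅ B, e.hom ≫ g = f := by
  have : Surjective (pullback.fst f g) := ⟨by
    rw [← Set.range_eq_univ, Scheme.Pullback.range_fst, ← h, Set.preimage_range]⟩
  have : Surjective (pullback.snd f g) := ⟨by
    rw [← Set.range_eq_univ, Scheme.Pullback.range_snd, h, Set.preimage_range]⟩
  have := isIso_of_isClosedImmersion_of_surjective (pullback.fst f g)
  have := isIso_of_isClosedImmersion_of_surjective (pullback.snd f g)
  refine ⟨(asIso (pullback.fst f g)).symm ≪≫ asIso (pullback.snd f g), ?_⟩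
  simp [← pullback.condition]

end Schemes

namespace Variety

attribute [instance] reduced separated locallyOfFiniteType quasiCompact

variable {k : Type u} [Field k]

instance (X : Variety k) : IsNoetherian X.toScheme where
  toIsLocallyNoetherian := LocallyOfFiniteType.isLocallyNoetherian X.str
  toCompactSpace := QuasiCompact.compactSpace_of_compactSpace X.str

/-- The open subscheme `U` of a variety, as a variety. -/
abbrev restrict (X : Variety k) (U : X.toScheme.Opens) : Variety k where
  toScheme := U.toScheme
  str := U.ι ≫ X.str
  reduced := isReduced_of_isOpenImmersion U.ι
  separated := inferInstance
  locallyOfFiniteType := inferInstance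
  quasiCompact := inferInstance

/-- The closed complement `X ∖ U` of an open subset of a variety, with its reduced scheme
structure: the canonical witness of `IsComplementOf`. -/
abbrev complement (X : Variety k) (U : X.toScheme.Opens) : Variety k where
  toScheme := (Scheme.IdealSheafData.vanishingIdeal U.compl).subscheme
  str := (Scheme.IdealSheafData.vanishingIdeal U.compl).subschemeι ≫ X.str
  reduced := isReduced_subscheme_vanishingIdeal _ _
  separated := inferInstance
  locallyOfFiniteType := inferInstance
  quasiCompact := inferInstance

lemma isComplementOf_complement (X : Variety k) (U : X.toScheme.Opens) :
    IsComplementOf (X.complement U) X U :=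
  ⟨_, inferInstance, rfl, Scheme.IdealSheafData.range_subschemeι _⟩

lemma dim_restrict_le (X : Variety k) (U : X.toScheme.Opens) : (X.restrict U).dim ≤ X.dim :=
  U.ι.isOpenEmbedding.isInducing.topologicalKrullDim_le

namespace IsComplementOf

variable {X Y A B : Variety k} {U U₀ : X.toScheme.Opens}

lemma dim_le (hA : IsComplementOf A X U) : A.dim ≤ X.dim := by
  obtain ⟨i, _, -, -⟩ := hA
  exact i.isClosedEmbedding.isInducing.topologicalKrullDim_le

lemma dim_add_one_le (hA : IsComplementOf A X U) (hU : Dense (U : Set X.toScheme)) :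
    A.dim + 1 ≤ X.dim := by
  obtain ⟨i, _, -, hi⟩ := hA
  refine topologicalKrullDim_add_one_le_of_isNowhereDense i.isClosedEmbedding.isInducing ?_
  rw [hi]
  exact (isClosed_isNowhereDense_iff_compl.mpr (by simpa using ⟨U.isOpen, hU⟩)).2

lemma exists_iso (hA : IsComplementOf A X U) (hB : IsComplementOf B X U) :
    ∃ e : A.toScheme ≅ B.toScheme, e.hom ≫ B.str = A.str := by
  obtain ⟨i, _, hiX, hi⟩ := hA
  obtain ⟨j, _, hjX, hj⟩ := hB
  obtain ⟨e, he⟩ := exists_iso_of_range_eq i j (hi.trans hj.symm)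
  exact ⟨e, by rw [← hjX, reassoc_of% he, hiX]⟩

lemma map_iso {V : Y.toScheme.Opens} (hA : IsComplementOf A X U) (e : X.toScheme ≅ Y.toScheme)
    (he : e.hom ≫ Y.str = X.str) (hUV : e.hom ⁻¹ᵁ V = U) : IsComplementOf A Y V := by
  obtain ⟨i, _, hiX, hi⟩ := hA
  refine ⟨i ≫ e.hom, inferInstance, by rw [Category.assoc, he, hiX], ?_⟩
  calc Set.range (i ≫ e.hom) = e.hom '' Set.range i := by
        rw [Scheme.Hom.comp_base, TopCat.coe_comp, Set.range_comp]
    _ = e.hom '' (e.hom ⁻¹' (V : Set Y.toScheme)ᶜ) := by rw [hi, ← hUV]; rfl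
    _ = (V : Set Y.toScheme)ᶜ := Set.image_preimage_eq _ e.hom.homeomorph.surjective

lemma exists_complement_restrict (hA : IsComplementOf A X U₀) (hle : U₀ ≤ U) :
    ∃ O : A.toScheme.Opens, IsComplementOf (A.complement O) X U ∧
      IsComplementOf (A.restrict O) (X.restrict U) (U.ι ⁻¹ᵁ U₀) := by
  obtain ⟨i, _, hiX, hi⟩ := hA
  refine ⟨i ⁻¹ᵁ U, ?_, i ∣_ U, inferInstance, ?_, ?_⟩
  · obtain ⟨j, _, hjA, hj⟩ := A.isComplementOf_complement (i ⁻¹ᵁ U)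
    refine ⟨j ≫ i, inferInstance, by rw [Category.assoc, hiX, hjA], ?_⟩
    calc Set.range (j ≫ i) = i '' Set.range j := by
          rw [Scheme.Hom.comp_base, TopCat.coe_comp, Set.range_comp]
      _ = i '' (i ⁻¹' (U : Set X.toScheme)ᶜ) := by rw [hj]; rfl
      _ = (U : Set X.toScheme)ᶜ := by
          rw [Set.image_preimage_eq_iff, hi]
          exact Set.compl_subset_compl.mpr hle
  · change i ∣_ U ≫ U.ι ≫ X.str = (i ⁻¹ᵁ U).ι ≫ A.str
    rw [morphismRestrict_ι_assoc, hiX]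
  · rw [range_morphismRestrict, hi, Set.preimage_compl]
    rfl

end IsComplementOf

section GrothendieckGroup

variable {P : Variety k → Prop}

lemma K0.cls_eq_of_iso {A B : Variety k} (hA : P A) (hB : P B) (e : A.toScheme ≅ B.toScheme)
    (he : e.hom ≫ B.str = A.str) : K0.cls A hA = K0.cls B hB :=
  QuotientAddGroup.eq_iff_sub_mem.mpr
    (AddSubgroup.subset_closure (Or.inl ⟨⟨A, hA⟩, ⟨B, hB⟩, ⟨e, he⟩, rfl⟩))

lemma K0.cls_eq_complement_add_restrict {X : Variety k} {U : X.toScheme.Opens} (hX : P X)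
    (hC : P (X.complement U)) (hR : P (X.restrict U)) :
    K0.cls X hX = K0.cls (X.complement U) hC + K0.cls (X.restrict U) hR := by
  obtain ⟨i, hi, hiX, hir⟩ := X.isComplementOf_complement U
  refine QuotientAddGroup.eq_iff_sub_mem.mpr (AddSubgroup.subset_closure (Or.inr
    ⟨⟨X, hX⟩, ⟨_, hC⟩, ⟨_, hR⟩, i, U.ι, hi, inferInstance, hiX, rfl, ?_, (sub_sub _ _ _).symm⟩))
  rw [hir, compl_compl]
  exact U.range_ι

lemma InMulLImage.add {a b : ℕ} {x y : K0le k b} (hx : InMulLImage a b x)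
    (hy : InMulLImage a b y) : InMulLImage a b (x + y) := by
  obtain ⟨m, c, Z, W, hZ, hW, h, rfl⟩ := hx
  obtain ⟨m', c', Z', W', hZ', hW', h', rfl⟩ := hy
  refine ⟨m + m', Fin.append c c', Fin.append Z Z', Fin.append W W', ?_, ?_, ?_, ?_⟩
  · exact Fin.addCases (by simpa using hZ) (by simpa using hZ')
  · exact Fin.addCases (by simpa using hW) (by simpa using hW')
  · exact Fin.addCases (by simpa using h) (by simpa using h')
  · simp [Fin.sum_univ_add]

end GrothendieckGroup

namespace ConvenientRep

variable {n : ℕ} {X Y Z : Variety k} {U U₀ : X.toScheme.Opens} {V V₀ : Y.toScheme.Opens}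
  {T : Z.toScheme.Opens}

lemma trans (hXY : ConvenientRep n X Y U V) (hYZ : ConvenientRep n Y Z V T)
    (hdim : Y.dim ≤ (n : WithBot ℕ∞)) (hV : Dense (V : Set Y.toScheme)) :
    ConvenientRep n X Z U T := by
  intro A B hA hB hAX hBZ
  have hCY := Y.isComplementOf_complement V
  have hC : (Y.complement V).dim ≤ ((n - 1 : ℕ) : WithBot ℕ∞) :=
    le_natCast_sub_one_of_add_one_le ((hCY.dim_add_one_le hV).trans hdim)
  simpa only [sub_add_sub_cancel] using
    (hXY A _ hA hC hAX hCY).add (hYZ _ B hC hB hCY hBZ)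

lemma of_preimage_eq (hUV : ConvenientRep n X Y U V) (hU : U₀ ≤ U) (hV : V₀ ≤ V)
    (e : U.toScheme ≅ V.toScheme) (he : e.hom ≫ V.ι ≫ Y.str = U.ι ≫ X.str)
    (h : e.hom ⁻¹ᵁ V.ι ⁻¹ᵁ V₀ = U.ι ⁻¹ᵁ U₀) : ConvenientRep n X Y U₀ V₀ := by
  intro A B hA hB hAX hBY
  obtain ⟨O, hOX, hOU⟩ := hAX.exists_complement_restrict hU
  obtain ⟨O', hOY, hOV⟩ := hBY.exists_complement_restrict hV
  have hOU' : IsComplementOf (A.restrict O) (Y.restrict V) (V.ι ⁻¹ᵁ V₀) := hOU.map_iso e he h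
  obtain ⟨φ, hφ⟩ := hOU'.exists_iso hOV
  have hAC := (A.isComplementOf_complement O).dim_le.trans hA
  have hBC := (B.isComplementOf_complement O').dim_le.trans hB
  have hAR := (A.dim_restrict_le O).trans hA
  have hBR := (B.dim_restrict_le O').trans hB
  have hAcls : (K0.cls A hA : K0le k (n - 1)) =
      K0.cls (A.complement O) hAC + K0.cls (A.restrict O) hAR :=
    K0.cls_eq_complement_add_restrict hA hAC hAR
  have hBcls : (K0.cls B hB : K0le k (n - 1)) =
      K0.cls (B.complement O') hBC + K0.cls (B.restrict O') hBR :=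
    K0.cls_eq_complement_add_restrict hB hBC hBR
  have hcls : (K0.cls (A.restrict O) hAR : K0le k (n - 1)) = K0.cls (B.restrict O') hBR :=
    K0.cls_eq_of_iso hAR hBR φ hφ
  rw [hAcls, hBcls, hcls, add_sub_add_right_eq_sub]
  exact hUV _ _ hAC hBC hOX hOY

lemma restrict (hUV : ConvenientRep n X Y U V) (e : U.toScheme ≅ V.toScheme)
    (he : e.hom ≫ V.ι ≫ Y.str = U.ι ≫ X.str)
    (e₀ : U₀.toScheme ≅ V₀.toScheme) (a : U₀.toScheme ⟶ U.toScheme) (ha : a ≫ U.ι = U₀.ι)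
    (hae : a ≫ e.hom ≫ V.ι = e₀.hom ≫ V₀.ι) : ConvenientRep n X Y U₀ V₀ := by
  have : IsOpenImmersion (a ≫ U.ι) := ha ▸ inferInstance
  have : IsOpenImmersion a := .of_comp a U.ι
  have hU : U₀ ≤ U := by simpa using opensRange_le_of_comp_eq ha
  have hrange : (e₀.hom ≫ V₀.ι).opensRange = V₀ := by
    rw [Scheme.Hom.opensRange_comp_of_isIso, V₀.opensRange_ι]
  have hV : V₀ ≤ V := by
    simpa only [Category.assoc, hrange, V.opensRange_ι] using
      opensRange_le_of_comp_eq (f := a ≫ e.hom) (g := V.ι) ((Category.assoc _ _ _).trans hae)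
  have hpreU : U.ι ⁻¹ᵁ U₀ = a.opensRange := by simpa using preimage_opensRange_of_comp_eq ha
  have hpreV : e.hom ⁻¹ᵁ V.ι ⁻¹ᵁ V₀ = a.opensRange := by
    simpa only [hrange, Scheme.Hom.comp_preimage] using preimage_opensRange_of_comp_eq hae
  exact hUV.of_preimage_eq hU hV e he (hpreV.trans hpreU.symm)

end ConvenientRep

end Variety

theorem convenientRep_comp_general {k : Type u} [Field k] {n : ℕ} {X Y Z : Variety k}
    (hYd : Y.dim ≤ (n : WithBot ℕ∞))
    {U : X.toScheme.Opens} {V : Y.toScheme.Opens} (hV : Dense (V : Set Y.toScheme))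
    (e' : U.toScheme ≅ V.toScheme) (he' : e'.hom ≫ V.ι ≫ Y.str = U.ι ≫ X.str)
    (hconv' : ConvenientRep n X Y U V)
    {W : Y.toScheme.Opens} {T : Z.toScheme.Opens}
    (e'' : W.toScheme ≅ T.toScheme) (he'' : e''.hom ≫ T.ι ≫ Z.str = W.ι ≫ Y.str)
    (hconv'' : ConvenientRep n Y Z W T)
    {U₀ : X.toScheme.Opens} {T₀ : Z.toScheme.Opens} (hU₀ : Dense (U₀ : Set X.toScheme))
    (e₀ : U₀.toScheme ≅ T₀.toScheme)
    (a : U₀.toScheme ⟶ U.toScheme) (g : U₀.toScheme ⟶ W.toScheme) (ha : a ≫ U.ι = U₀.ι)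
    (hg : a ≫ e'.hom ≫ V.ι = g ≫ W.ι) (h₀ : g ≫ e''.hom ≫ T.ι = e₀.hom ≫ T₀.ι) :
    ConvenientRep n X Z U₀ T₀ := by
  have : IsOpenImmersion (a ≫ U.ι) := ha ▸ inferInstance
  have : IsOpenImmersion a := .of_comp a U.ι
  let f := a ≫ e'.hom ≫ V.ι
  have hXY : ConvenientRep n X Y U₀ f.opensRange :=
    hconv'.restrict e' he' f.isoOpensRange a ha f.isoOpensRange_hom_ι.symm
  have hYZ : ConvenientRep n Y Z f.opensRange T₀ :=
    hconv''.restrict e'' he'' (f.isoOpensRange.symm ≪≫ e₀) (f.isoOpensRange.inv ≫ g)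
      (by rw [Category.assoc, ← hg, f.isoOpensRange_inv_comp]) (by simp [h₀])
  have hf : DenseRange f := by
    have hdense_a : DenseRange a :=
      denseRange_of_comp_eq ha (by rwa [DenseRange, U₀.range_ι])
    have hdense_V : DenseRange V.ι := by rwa [DenseRange, V.range_ι]
    exact hdense_V.comp (e'.hom.homeomorph.surjective.denseRange.comp hdense_a
      e'.hom.continuous) V.ι.continuous
  exact hXY.trans hYZ hYd hf

/-- The composite of convenient birational isomorphisms between smooth
projective varieties of dimension `n` is convenient. -/
theorem convenientRep_comp (k : Type u) [Field k] (n : ℕ) (X Y Z : Variety k)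
    (hXs : IsSmoothVar X) (hYs : IsSmoothVar Y) (hZs : IsSmoothVar Z)
    (hXp : IsProjectiveVar X) (hYp : IsProjectiveVar Y) (hZp : IsProjectiveVar Z)
    (hXi : IrreducibleSpace X.toScheme) (hYi : IrreducibleSpace Y.toScheme)
    (hZi : IrreducibleSpace Z.toScheme)
    (hXd : X.dim = (n : WithBot ℕ∞)) (hYd : Y.dim = (n : WithBot ℕ∞))
    (hZd : Z.dim = (n : WithBot ℕ∞))
    -- `φ' : X ⇢ Y`, represented by `e' : U ≅ V`, convenient:
    (U : X.toScheme.Opens) (V : Y.toScheme.Opens)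
    (hU : Dense (U : Set X.toScheme)) (hV : Dense (V : Set Y.toScheme))
    (e' : U.toScheme ≅ V.toScheme) (he' : e'.hom ≫ V.ι ≫ Y.str = U.ι ≫ X.str)
    (hconv' : ConvenientRep n X Y U V)
    -- `φ'' : Y ⇢ Z`, represented by `e'' : W ≅ T`, convenient:
    (W : Y.toScheme.Opens) (T : Z.toScheme.Opens)
    (hW : Dense (W : Set Y.toScheme)) (hT : Dense (T : Set Z.toScheme))
    (e'' : W.toScheme ≅ T.toScheme) (he'' : e''.hom ≫ T.ι ≫ Z.str = W.ι ≫ Y.str)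
    (hconv'' : ConvenientRep n Y Z W T)
    -- a representative `e₀ : U₀ ≅ T₀` of the composite `φ'' ∘ φ' : X ⇢ Z`:
    (U₀ : X.toScheme.Opens) (T₀ : Z.toScheme.Opens)
    (hU₀ : Dense (U₀ : Set X.toScheme)) (hT₀ : Dense (T₀ : Set Z.toScheme))
    (e₀ : U₀.toScheme ≅ T₀.toScheme)
    (a : U₀.toScheme ⟶ U.toScheme) (g : U₀.toScheme ⟶ W.toScheme)
    (ha : a ≫ U.ι = U₀.ι)
    (hg : a ≫ e'.hom ≫ V.ι = g ≫ W.ι)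
    (h₀ : g ≫ e''.hom ≫ T.ι = e₀.hom ≫ T₀.ι) :
    ConvenientRep n X Z U₀ T₀ :=
  convenientRep_comp_general hYd.le hV e' he' hconv' e'' he'' hconv'' hU₀ e₀ a g ha hg h₀
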